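/- arXiv:1203.2283 — 2 statements merged into one kernel-verified Lean document; each statement's English description precedes it below -/
import Mathlib

section
/- Let f be a differentiable function on [a,b] with |f'(x)| ≤ M for all x ∈ [a,b], and let α ≥ 1. Then for every x ∈ [a,b): |(1/2)f(x) − (α+1)Γ(α)·((b−x)^{1−α}/(2(b−a)))·J_a^α f(b) + (1/2)·J_a^{α−1}(P₂(x,·)f)(b) + ((b−x)^{2−α}/(2(b−a)))·Γ(α)·J_a^{α−1} f(b) + ((b−x)^{1−α}(x−a)/(2(b−a)^{2−α}))·f(a)| ≤ (M(b−x)^{1−α}/(b−a))·[((b−a)^α(x−a) + (b−x)^α(a+b−2x))/(2α)]. -/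
open MeasureTheory intervalIntegral Set

/-- Riemann–Liouville fractional integral of order `α` with base point `a`. -/
noncomputable def RL (a α : ℝ) (f : ℝ → ℝ) (x : ℝ) : ℝ :=
  if α = 0 then f x
  else (1 / Real.Gamma α) * ∫ t in a..x, (x - t) ^ (α - 1) * f t

/-- Fractional Peano kernel `P₂`. -/
noncomputable def P2 (a b α x t : ℝ) : ℝ :=
  if t < x then (t - a) / (b - a) * (b - x) ^ (1 - α) * Real.Gamma α
  else (t - b) / (b - a) * (b - x) ^ (1 - α) * Real.Gamma α

/-!
Integration by parts for `J_a^α` yields the fractional Montgomery identity, which expresses `f x`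
through `J_a^α f (b)`, `J_a^{α-1} (P₂ f) (b)` and `J_a^α (P₂ f') (b)`. Adding to it the same
integration by parts for `(t - x) f' t` shows that twice the Ostrowski–Grüss error is
`J_a^α (K f') (b)`, where `K` is a constant multiple of `2t - a - x` on `[a, x)` and of
`2t - b - x` on `[x, b]`. On these two intervals `|K|` is at most the same constant times `x - a`
and `b - x` respectively, and integrating this step function gives the bound.
-/

section Calculus

variable {a b c d r M : ℝ} {f f' : ℝ → ℝ}

lemma intervalIntegrable_sub_rpow (hr : -1 < r) :
    IntervalIntegrable (fun t : ℝ => (b - t) ^ r) volume c d := by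
  simpa using (intervalIntegrable_rpow' (a := b - c) (b := b - d) hr).comp_sub_left b (by simp)

lemma integral_sub_rpow (hr : -1 < r) :
    ∫ t in c..d, (b - t) ^ r = ((b - c) ^ (r + 1) - (b - d) ^ (r + 1)) / (r + 1) := by
  rw [integral_comp_sub_left (fun t : ℝ => t ^ r) b, integral_rpow (Or.inl hr)]

lemma integral_sub_rpow_mul_deriv (hcd : c ≤ d) (hdb : d ≤ b) (hr : 0 ≤ r)
    (hf : ContinuousOn f (Icc c d)) (hf' : ∀ t ∈ Ioo c d, HasDerivAt f (f' t) t)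
    (hint : IntervalIntegrable f' volume c d) :
    ∫ t in c..d, (b - t) ^ r * f' t =
      (b - d) ^ r * f d - (b - c) ^ r * f c + r * ∫ t in c..d, (b - t) ^ (r - 1) * f t := by
  have hpow : Continuous fun t : ℝ => (b - t) ^ r :=
    Continuous.rpow_const (by fun_prop) fun _ => Or.inr hr
  have hpow' : ∀ t ∈ Ioo c d, HasDerivAt (fun t : ℝ => (b - t) ^ r) (-r * (b - t) ^ (r - 1)) t := by
    intro t ht
    have hne : b - t ≠ 0 := by linarith [ht.2]
    simpa using ((hasDerivAt_id t).const_sub b).rpow_const (p := r) (Or.inl hne)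
  have hint' : IntervalIntegrable (fun t : ℝ => -r * (b - t) ^ (r - 1)) volume c d := by
    rcases hr.eq_or_lt with rfl | hr
    · simp
    · exact (intervalIntegrable_sub_rpow (by linarith)).const_mul _
  rw [integral_mul_deriv_eq_deriv_mul_of_hasDerivAt hpow.continuousOn (by rwa [uIcc_of_le hcd])
    (by rwa [min_eq_left hcd, max_eq_right hcd]) (by rwa [min_eq_left hcd, max_eq_right hcd])
    hint' hint]
  simp only [mul_assoc, intervalIntegral.integral_const_mul]
  ring

lemma intervalIntegrable_of_hasDerivAt_of_norm_le {E : Type*} [NormedAddCommGroup E]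
    [NormedSpace ℝ E] [CompleteSpace E] {f f' : ℝ → E} (hab : a ≤ b)
    (hf : ∀ t ∈ Ioo a b, HasDerivAt f (f' t) t) (hM : ∀ t ∈ Ioo a b, ‖f' t‖ ≤ M) :
    IntervalIntegrable f' volume a b := by
  have hderiv : EqOn (deriv f) f' (Ioo a b) := fun t ht => (hf t ht).deriv
  rw [intervalIntegrable_iff_integrableOn_Ioo_of_le hab]
  refine IntegrableOn.congr_fun ?_ hderiv measurableSet_Ioo
  refine Measure.integrableOn_of_bounded (M := M) (by simp) (aestronglyMeasurable_deriv f _) ?_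
  filter_upwards [ae_restrict_mem measurableSet_Ioo] with t ht
  simpa only [hderiv ht] using hM t ht

lemma integral_indicator_Iio {E : Type*} [NormedAddCommGroup E] [NormedSpace ℝ E] {f : ℝ → E}
    (hac : a ≤ c) (hcb : c ≤ b) :
    ∫ t in a..b, (Iio c).indicator f t = ∫ t in a..c, f t := by
  rw [← intervalIntegral.integral_indicator ⟨hac, hcb⟩]
  refine integral_congr_ae ?_
  filter_upwards [indicator_ae_eq_of_ae_eq_set (f := f) (Iio_ae_eq_Iic (a := c))] with t ht _
  exact ht

-- Mathlib's convention `Γ 0 = 0` makes this hold at `α = 1` too.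
lemma one_div_Gamma_sub_one (α : ℝ) :
    1 / Real.Gamma (α - 1) = (α - 1) * (1 / Real.Gamma α) := by
  have h := Complex.one_div_Gamma_eq_self_mul_one_div_Gamma_add_one ((α - 1 : ℝ) : ℂ)
  rw [← Complex.ofReal_one, ← Complex.ofReal_add, Complex.Gamma_ofReal, Complex.Gamma_ofReal,
    sub_add_cancel] at h
  simpa only [one_div] using mod_cast h

end Calculus

section RiemannLiouville

variable {a b c s α k : ℝ} {f f' g : ℝ → ℝ}

/-- Convergence of the integral defining `RL a α f x`; no condition at the order `α = 0`, where
`RL a 0` is evaluation. -/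
def RLIntegrable (a α : ℝ) (f : ℝ → ℝ) (x : ℝ) : Prop :=
  α ≠ 0 → IntervalIntegrable (fun t => (x - t) ^ (α - 1) * f t) volume a x

lemma RLIntegrable.continuousOn_mul (hf : RLIntegrable a α f b) (hg : ContinuousOn g (uIcc a b)) :
    RLIntegrable a α (fun t => g t * f t) b := fun hα => by
  simpa only [mul_left_comm] using (hf hα).continuousOn_mul hg

lemma RLIntegrable.add (hf : RLIntegrable a α f b) (hg : RLIntegrable a α g b) :
    RLIntegrable a α (fun t => f t + g t) b := fun hα => by
  simpa only [mul_add] using (hf hα).add (hg hα)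

lemma RLIntegrable.const_mul (hf : RLIntegrable a α f b) (k : ℝ) :
    RLIntegrable a α (fun t => k * f t) b :=
  hf.continuousOn_mul continuousOn_const

lemma RLIntegrable.indicator {A : Set ℝ} (hf : RLIntegrable a α f b) (hA : MeasurableSet A) :
    RLIntegrable a α (A.indicator f) b := fun hα => by
  simp only [← indicator_mul_right A (fun t => (b - t) ^ (α - 1))]
  rw [intervalIntegrable_iff]
  exact (intervalIntegrable_iff.1 (hf hα)).indicator hA

lemma rlIntegrable_of_continuousOn (hα : 0 ≤ α) (hf : ContinuousOn f (uIcc a b)) :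
    RLIntegrable a α f b := fun hα0 =>
  (intervalIntegrable_sub_rpow (by linarith [hα.lt_of_ne' hα0])).mul_continuousOn hf

lemma rlIntegrable_of_intervalIntegrable (hα : 1 ≤ α) (hf : IntervalIntegrable f volume a b) :
    RLIntegrable a α f b := fun _ =>
  hf.continuousOn_mul
    (Continuous.rpow_const (f := fun t : ℝ => b - t) (by fun_prop)
      fun _ => Or.inr (by linarith)).continuousOn

lemma RL_of_ne_zero (hα : α ≠ 0) :
    RL a α f b = 1 / Real.Gamma α * ∫ t in a..b, (b - t) ^ (α - 1) * f t :=
  if_neg hα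

lemma RL_const_mul : RL a α (fun t => k * f t) b = k * RL a α f b := by
  by_cases hα : α = 0
  · simp [RL, hα]
  · simp only [RL_of_ne_zero hα, mul_left_comm _ k, intervalIntegral.integral_const_mul]

lemma RL_add (hf : RLIntegrable a α f b) (hg : RLIntegrable a α g b) :
    RL a α (fun t => f t + g t) b = RL a α f b + RL a α g b := by
  by_cases hα : α = 0
  · simp [RL, hα]
  · simp only [RL_of_ne_zero hα, mul_add, intervalIntegral.integral_add (hf hα) (hg hα)]

lemma abs_RL_le (hα : 0 ≤ α) (hab : a ≤ b) (h : ∀ t ∈ Icc a b, |f t| ≤ g t)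
    (hg : RLIntegrable a α g b) : |RL a α f b| ≤ RL a α g b := by
  rcases hα.eq_or_lt with rfl | hα
  · simpa [RL] using h b (right_mem_Icc.2 hab)
  have hΓ : 0 < 1 / Real.Gamma α := one_div_pos.2 (Real.Gamma_pos_of_pos hα)
  rw [RL_of_ne_zero hα.ne', RL_of_ne_zero hα.ne', abs_mul, abs_of_pos hΓ]
  gcongr
  rw [← Real.norm_eq_abs]
  refine intervalIntegral.norm_integral_le_of_norm_le hab (.of_forall fun t ht => ?_) (hg hα.ne')
  have hpow : 0 ≤ (b - t) ^ (α - 1) := Real.rpow_nonneg (sub_nonneg.2 ht.2) _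
  rw [Real.norm_eq_abs, abs_mul, abs_of_nonneg hpow]
  gcongr
  exact h t (Ioc_subset_Icc_self ht)

-- At `α = 0` the right-hand side vanishes because `Γ 0 = 0` in Mathlib.
lemma RL_indicator_Iio (hac : a ≤ c) (hcb : c ≤ b) :
    RL a α ((Iio c).indicator f) b = 1 / Real.Gamma α * ∫ t in a..c, (b - t) ^ (α - 1) * f t := by
  by_cases hα : α = 0
  · simp [RL, hα, hcb]
  · simp only [RL_of_ne_zero hα, ← indicator_mul_right (Iio c) (fun t => (b - t) ^ (α - 1)),
      integral_indicator_Iio hac hcb]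

lemma RL_indicator_Iio_const (hα : 0 < α) (hac : a ≤ c) (hcb : c ≤ b) :
    RL a α ((Iio c).indicator fun _ => k) b =
      k * ((b - a) ^ α - (b - c) ^ α) / (α * Real.Gamma α) := by
  rw [RL_indicator_Iio hac hcb, intervalIntegral.integral_mul_const,
    integral_sub_rpow (by linarith), sub_add_cancel]
  field_simp

lemma RL_const (hα : 0 < α) :
    RL a α (fun _ => k) b = k * (b - a) ^ α / (α * Real.Gamma α) := by
  rw [RL_of_ne_zero hα.ne', intervalIntegral.integral_mul_const, integral_sub_rpow (by linarith),
    sub_add_cancel, sub_self, Real.zero_rpow hα.ne', sub_zero]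
  field_simp

lemma RL_sub_endpoint_mul (hα : 1 ≤ α) (hab : a ≤ b) :
    RL a (α - 1) (fun t => (t - b) * f t) b = -((α - 1) * RL a α f b) := by
  by_cases hα1 : α - 1 = 0
  · simp [RL, hα1]
  have hpow : EqOn (fun t => (b - t) ^ (α - 1 - 1) * ((t - b) * f t))
      (fun t => -((b - t) ^ (α - 1) * f t)) (Ioo a b) := fun t ht => by
    have hne : b - t ≠ 0 := by linarith [ht.2]
    simp only [Real.rpow_sub_one hne (α - 1)]
    field_simp
    ring
  rw [RL_of_ne_zero hα1, RL_of_ne_zero (by linarith), integral_congr_Ioo_of_le hab hpow,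
    intervalIntegral.integral_neg, one_div_Gamma_sub_one]
  ring

lemma RL_sub_mul (hα : 1 ≤ α) (hab : a ≤ b) (hf : RLIntegrable a (α - 1) f b) :
    RL a (α - 1) (fun t => (t - s) * f t) b =
      (b - s) * RL a (α - 1) f b - (α - 1) * RL a α f b := by
  calc RL a (α - 1) (fun t => (t - s) * f t) b
      = RL a (α - 1) (fun t => (t - b) * f t + (b - s) * f t) b := by
        congr 1; ext t; ring
    _ = _ := by
        rw [RL_add (hf.continuousOn_mul (by fun_prop)) (hf.const_mul _), RL_const_mul,
          RL_sub_endpoint_mul hα hab]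
        ring

lemma RL_indicator_Iio_deriv (hα : 1 ≤ α) (hac : a ≤ c) (hcb : c ≤ b)
    (hf : ContinuousOn f (Icc a c)) (hf' : ∀ t ∈ Ioo a c, HasDerivAt f (f' t) t)
    (hint : IntervalIntegrable f' volume a c) :
    RL a α ((Iio c).indicator f') b =
      ((b - c) ^ (α - 1) * f c - (b - a) ^ (α - 1) * f a) / Real.Gamma α +
        RL a (α - 1) ((Iio c).indicator f) b := by
  rw [RL_indicator_Iio hac hcb, RL_indicator_Iio hac hcb, one_div_Gamma_sub_one,
    integral_sub_rpow_mul_deriv hac hcb (by linarith) hf hf' hint]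
  ring

lemma RL_deriv (hα : 1 ≤ α) (hab : a ≤ b)
    (hf : ContinuousOn f (Icc a b)) (hf' : ∀ t ∈ Ioo a b, HasDerivAt f (f' t) t)
    (hint : IntervalIntegrable f' volume a b) :
    RL a α f' b = RL a (α - 1) f b - (b - a) ^ (α - 1) * f a / Real.Gamma α := by
  rw [RL_of_ne_zero (by linarith), integral_sub_rpow_mul_deriv hab le_rfl (by linarith) hf hf' hint]
  rcases hα.eq_or_lt with rfl | hα
  · simp [RL]
  · have hα1 : α - 1 ≠ 0 := by linarith
    rw [RL_of_ne_zero hα1, one_div_Gamma_sub_one, sub_self, Real.zero_rpow hα1]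
    ring

lemma RL_sub_mul_deriv (hα : 1 ≤ α) (hab : a ≤ b)
    (hf : ContinuousOn f (Icc a b)) (hf' : ∀ t ∈ Ioo a b, HasDerivAt f (f' t) t)
    (hint : IntervalIntegrable f' volume a b) :
    RL a α (fun t => (t - s) * f' t) b =
      (b - s) * RL a (α - 1) f b - α * RL a α f b
        + (b - a) ^ (α - 1) * (s - a) * f a / Real.Gamma α := by
  have hfu : ContinuousOn f (uIcc a b) := by rwa [uIcc_of_le hab]
  have hderiv : ∀ t ∈ Ioo a b, HasDerivAt (fun t => (t - s) * f t) (f t + (t - s) * f' t) t :=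
    fun t ht => by simpa only [one_mul] using ((hasDerivAt_id' t).sub_const s).fun_mul (hf' t ht)
  have hparts := RL_deriv hα hab (by fun_prop) hderiv
    (hfu.intervalIntegrable.add (hint.continuousOn_mul (by fun_prop)))
  rw [RL_add (rlIntegrable_of_continuousOn (by linarith) hfu)
    ((rlIntegrable_of_intervalIntegrable hα hint).continuousOn_mul (by fun_prop)),
    RL_sub_mul hα hab (rlIntegrable_of_continuousOn (by linarith) hfu)] at hparts
  linear_combination hparts

end RiemannLiouville

section PeanoKernel

variable {a b α β x t M : ℝ} {f f' g : ℝ → ℝ}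

/-- The common slope `(b - x)^(1 - α) Γ(α) / (b - a)` of the two affine pieces of `P2 a b α x`. -/
noncomputable def P2Slope (a b α x : ℝ) : ℝ :=
  (b - x) ^ (1 - α) * Real.Gamma α / (b - a)

lemma P2Slope_pos (hα : 0 < α) (hab : a < b) (hxb : x < b) : 0 < P2Slope a b α x :=
  div_pos (mul_pos (Real.rpow_pos_of_pos (sub_pos.2 hxb) _) (Real.Gamma_pos_of_pos hα))
    (sub_pos.2 hab)

lemma P2_of_lt (h : t < x) : P2 a b α x t = P2Slope a b α x * (t - a) := by
  rw [P2, if_pos h, P2Slope]; ring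

lemma P2_of_le (h : x ≤ t) : P2 a b α x t = P2Slope a b α x * (t - b) := by
  rw [P2, if_neg h.not_gt, P2Slope]; ring

lemma P2_mul_eq_add_indicator :
    P2 a b α x t * g t = P2Slope a b α x * ((t - b) * g t) +
      P2Slope a b α x * (b - a) * (Iio x).indicator g t := by
  rcases lt_or_ge t x with h | h
  · rw [P2_of_lt h, indicator_of_mem (mem_Iio.2 h)]; ring
  · rw [P2_of_le h, indicator_of_notMem (notMem_Iio.2 h)]; ring

lemma RLIntegrable.P2_mul (hg : RLIntegrable a β g b) :
    RLIntegrable a β (fun t => P2 a b α x t * g t) b := by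
  simp only [P2_mul_eq_add_indicator]
  exact ((hg.continuousOn_mul (by fun_prop)).const_mul _).add
    ((hg.indicator measurableSet_Iio).const_mul _)

lemma RL_P2_mul (hg : RLIntegrable a β g b) :
    RL a β (fun t => P2 a b α x t * g t) b =
      P2Slope a b α x * RL a β (fun t => (t - b) * g t) b +
        P2Slope a b α x * (b - a) * RL a β ((Iio x).indicator g) b := by
  simp only [P2_mul_eq_add_indicator]
  rw [RL_add ((hg.continuousOn_mul (by fun_prop)).const_mul _)
    ((hg.indicator measurableSet_Iio).const_mul _), RL_const_mul, RL_const_mul]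

theorem fractional_montgomery_identity (hα : 1 ≤ α) (hax : a ≤ x) (hxb : x < b)
    (hf : ContinuousOn f (Icc a b)) (hf' : ∀ t ∈ Ioo a b, HasDerivAt f (f' t) t)
    (hint : IntervalIntegrable f' volume a b) :
    f x = P2Slope a b α x * RL a α f b - RL a (α - 1) (fun t => P2 a b α x t * f t) b +
      RL a α (fun t => P2 a b α x t * f' t) b := by
  have hab : a < b := hax.trans_lt hxb
  have hΓ : Real.Gamma α ≠ 0 := (Real.Gamma_pos_of_pos (by linarith)).ne'
  have hfint : RLIntegrable a (α - 1) f b :=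
    rlIntegrable_of_continuousOn (by linarith) (by rwa [uIcc_of_le hab.le])
  have hslope : P2Slope a b α x * (b - a) * (b - x) ^ (α - 1) = Real.Gamma α := by
    have hpow : (b - x) ^ (1 - α) * (b - x) ^ (α - 1) = 1 := by
      rw [← Real.rpow_add (sub_pos.2 hxb)]; simp
    rw [P2Slope, div_mul_cancel₀ _ (sub_pos.2 hab).ne']
    linear_combination Real.Gamma α * hpow
  rw [RL_P2_mul hfint, RL_P2_mul (rlIntegrable_of_intervalIntegrable hα hint),
    RL_sub_endpoint_mul hα hab.le, RL_sub_mul_deriv hα hab.le hf hf' hint,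
    RL_indicator_Iio_deriv hα hax hxb.le (hf.mono (Icc_subset_Icc_right hxb.le))
      (fun t ht => hf' t ⟨ht.1, ht.2.trans hxb⟩)
      (hint.mono_set (uIcc_subset_uIcc_left (by rw [uIcc_of_le hab.le]; exact ⟨hax, hxb.le⟩)))]
  field_simp
  linear_combination -f x * hslope

/-- The kernel whose `α`-th fractional integral against `f'` is twice the Ostrowski–Grüss error.
The affine correction to `P2` centres its two pieces at the midpoints of `[a, x]` and `[x, b]`. -/
noncomputable def ostrowskiGrussKernel (a b α x t : ℝ) : ℝ :=
  P2 a b α x t + P2Slope a b α x * (t - x)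

lemma RL_ostrowskiGrussKernel_mul_deriv (hα : 1 ≤ α) (hax : a ≤ x) (hxb : x < b)
    (hf : ContinuousOn f (Icc a b)) (hf' : ∀ t ∈ Ioo a b, HasDerivAt f (f' t) t)
    (hint : IntervalIntegrable f' volume a b) :
    RL a α (fun t => ostrowskiGrussKernel a b α x t * f' t) b =
      f x - (α + 1) * P2Slope a b α x * RL a α f b
        + RL a (α - 1) (fun t => P2 a b α x t * f t) b
        + (b - x) * P2Slope a b α x * RL a (α - 1) f b
        + P2Slope a b α x * (b - a) ^ (α - 1) * (x - a) / Real.Gamma α * f a := by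
  have hf'int : RLIntegrable a α f' b := rlIntegrable_of_intervalIntegrable hα hint
  simp only [ostrowskiGrussKernel, add_mul, mul_assoc]
  rw [RL_add hf'int.P2_mul ((hf'int.continuousOn_mul (by fun_prop)).const_mul _), RL_const_mul,
    RL_sub_mul_deriv hα (hax.trans hxb.le) hf hf' hint]
  linear_combination -fractional_montgomery_identity hα hax hxb hf hf' hint

lemma abs_ostrowskiGrussKernel_le (hα : 0 < α) (hab : a < b) (hxb : x < b) (ht : t ∈ Icc a b) :
    |ostrowskiGrussKernel a b α x t| ≤
      P2Slope a b α x * (b - x + (Iio x).indicator (fun _ => x - a - (b - x)) t) := by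
  have hslope := P2Slope_pos hα hab hxb
  rcases lt_or_ge t x with h | h
  · rw [ostrowskiGrussKernel, P2_of_lt h, indicator_of_mem (mem_Iio.2 h), ← mul_add, abs_mul,
      abs_of_pos hslope]
    gcongr
    exact abs_le.2 ⟨by linarith [ht.1], by linarith⟩
  · rw [ostrowskiGrussKernel, P2_of_le h, indicator_of_notMem (notMem_Iio.2 h), ← mul_add, abs_mul,
      abs_of_pos hslope]
    gcongr
    exact abs_le.2 ⟨by linarith, by linarith [ht.2]⟩

lemma abs_RL_ostrowskiGrussKernel_mul_le (hα : 0 < α) (hax : a ≤ x) (hxb : x < b)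
    (hg : ∀ t ∈ Icc a b, |g t| ≤ M) :
    |RL a α (fun t => ostrowskiGrussKernel a b α x t * g t) b| ≤
      M * P2Slope a b α x * (((b - a) ^ α * (x - a) + (b - x) ^ α * (a + b - 2 * x)) /
        (α * Real.Gamma α)) := by
  have hab : a < b := hax.trans_lt hxb
  have hconst (k : ℝ) : RLIntegrable a α (fun _ => k) b :=
    rlIntegrable_of_continuousOn hα.le continuousOn_const
  have hstep := (hconst (x - a - (b - x))).indicator (measurableSet_Iio (a := x))
  calc |RL a α (fun t => ostrowskiGrussKernel a b α x t * g t) b|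
      ≤ RL a α (fun t => M * P2Slope a b α x *
          (b - x + (Iio x).indicator (fun _ => x - a - (b - x)) t)) b := by
        refine abs_RL_le hα.le hab.le (fun t ht => ?_) (RLIntegrable.const_mul ?_ _)
        · rw [abs_mul, mul_comm, mul_assoc]
          exact mul_le_mul (hg t ht) (abs_ostrowskiGrussKernel_le hα hab hxb ht) (abs_nonneg _)
            ((abs_nonneg _).trans (hg t ht))
        · exact (hconst _).add hstep
    _ = _ := by
        rw [RL_const_mul, RL_add (hconst _) hstep, RL_const hα,
          RL_indicator_Iio_const hα hax hxb.le]
        ring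

end PeanoKernel

theorem fractional_ostrowski_gruss
    (a b α M : ℝ) (hab : a < b) (hα : 1 ≤ α) (hM : 0 < M)
    (f f' : ℝ → ℝ)
    (hf : ∀ t ∈ Set.Icc a b, HasDerivAt f (f' t) t)
    (hbound : ∀ t ∈ Set.Icc a b, |f' t| ≤ M)
    (x : ℝ) (hx : x ∈ Set.Ico a b) :
    |(1 / 2) * f x
      - (α + 1) * Real.Gamma α * ((b - x) ^ (1 - α) / (2 * (b - a))) * RL a α f b
      + (1 / 2) * RL a (α - 1) (fun t => P2 a b α x t * f t) b
      + ((b - x) ^ (2 - α) / (2 * (b - a))) * Real.Gamma α * RL a (α - 1) f b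
      + ((b - x) ^ (1 - α) * (x - a) / (2 * (b - a) ^ (2 - α))) * f a|
    ≤ M * (b - x) ^ (1 - α) / (b - a) *
        (((b - a) ^ α * (x - a) + (b - x) ^ α * (a + b - 2 * x)) / (2 * α)) := by
  obtain ⟨hax, hxb⟩ := hx
  have hα0 : 0 < α := by linarith
  have hf' : ∀ t ∈ Ioo a b, HasDerivAt f (f' t) t := fun t ht => hf t (Ioo_subset_Icc_self ht)
  have hint : IntervalIntegrable f' volume a b :=
    intervalIntegrable_of_hasDerivAt_of_norm_le hab.le hf' fun t ht =>
      hbound t (Ioo_subset_Icc_self ht)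
  have hkernel := RL_ostrowskiGrussKernel_mul_deriv hα hax hxb
    (fun t ht => (hf t ht).continuousAt.continuousWithinAt) hf' hint
  have hle := abs_RL_ostrowskiGrussKernel_mul_le hα0 hax hxb hbound
  have hba : 0 < b - a := sub_pos.2 hab
  have hpow : (b - x) ^ (2 - α) = (b - x) ^ (1 - α) * (b - x) := by
    rw [← Real.rpow_add_one (sub_pos.2 hxb).ne']; ring_nf
  have hpow' : (b - a) ^ (2 - α) = (b - a) / (b - a) ^ (α - 1) := by
    rw [show 2 - α = 1 - (α - 1) by ring, Real.rpow_sub hba, Real.rpow_one]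
  calc _ = |1 / 2 * RL a α (fun t => ostrowskiGrussKernel a b α x t * f' t) b| := by
        rw [hkernel, hpow, hpow', P2Slope]
        congr 1
        field_simp
    _ ≤ _ := by
        rw [abs_mul, abs_of_pos one_half_pos]
        refine (mul_le_mul_of_nonneg_left hle one_half_pos.le).trans_eq ?_
        rw [P2Slope]
        field_simp
end

section
/- Let f : [a,b] → ℝ be differentiable on [a,b] with f' integrable on [a,b], and let α ≥ 1. Then for every x ∈ [a,b]: ∫_a^b (b−t)^{α−1}(t−x) f'(t) dt = (x−a)(b−a)^{α−1} f(a) + (b−x)·Γ(α)·J_a^{α−1} f(b) − Γ(α+1)·J_a^α f(b). -/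
open MeasureTheory intervalIntegral Set

/-!
Since `t - x = (b - x) - (b - t)`, the left-hand side is a combination of the fractional integrals
of `f'` at `b` of orders `α` and `α + 1`. The fundamental theorem of calculus for fractional
integrals, `J^{α+1} f' (b) = J^α f (b) - (b - a)^α / Γ(α + 1) * f a`, lowers both orders by one,
and the two boundary terms add up to `(x - a) * (b - a)^(α - 1) * f a`.
-/

theorem RL_zero (a : ℝ) (f : ℝ → ℝ) (x : ℝ) : RL a 0 f x = f x :=
  if_pos rfl

theorem Gamma_mul_RL {α : ℝ} (hα : 0 < α) (a : ℝ) (f : ℝ → ℝ) (x : ℝ) :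
    Real.Gamma α * RL a α f x = ∫ t in a..x, (x - t) ^ (α - 1) * f t := by
  rw [RL, if_neg hα.ne', ← mul_assoc, mul_one_div_cancel (Real.Gamma_pos_of_pos hα).ne', one_mul]

theorem Gamma_add_one_mul_RL_add_one {α : ℝ} (hα : -1 < α) (a : ℝ) (f : ℝ → ℝ) (x : ℝ) :
    Real.Gamma (α + 1) * RL a (α + 1) f x = ∫ t in a..x, (x - t) ^ α * f t := by
  rw [Gamma_mul_RL (by linarith), add_sub_cancel_right]

theorem mul_rpow_sub_one_of_nonneg {y r : ℝ} (hy : 0 ≤ y) (hr : r ≠ 0) :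
    y * y ^ (r - 1) = y ^ r := by
  rw [← Real.rpow_one_add' hy (by rwa [add_sub_cancel]), add_sub_cancel]

theorem intervalIntegrable_const_sub_rpow {r : ℝ} (hr : -1 < r) (a b c : ℝ) :
    IntervalIntegrable (fun t ↦ (c - t) ^ r) volume a b := by
  simpa using (intervalIntegrable_rpow' (a := c - a) (b := c - b) hr).comp_sub_left c

theorem continuous_const_sub_rpow {r : ℝ} (hr : 0 ≤ r) (c : ℝ) :
    Continuous fun t : ℝ ↦ (c - t) ^ r :=
  (continuous_const.sub continuous_id).rpow_const fun _ ↦ Or.inr hr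

theorem hasDerivAt_const_sub_rpow {c t : ℝ} (ht : t ≠ c) (r : ℝ) :
    HasDerivAt (fun s ↦ (c - s) ^ r) (-(r * (c - t) ^ (r - 1))) t := by
  simpa using ((hasDerivAt_id t).const_sub c).rpow_const (p := r) (Or.inl (sub_ne_zero.2 ht.symm))

section HasDerivAt

variable {a b α : ℝ} {f f' : ℝ → ℝ}

theorem integral_const_sub_rpow_mul_of_hasDerivAt (hab : a ≤ b) (hα : 0 < α)
    (hfc : ContinuousOn f (Icc a b)) (hf : ∀ t ∈ Ioo a b, HasDerivAt f (f' t) t)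
    (hf' : IntervalIntegrable f' volume a b) :
    ∫ t in a..b, (b - t) ^ α * f' t =
      α * (∫ t in a..b, (b - t) ^ (α - 1) * f t) - (b - a) ^ α * f a := by
  have parts := integral_mul_deriv_eq_deriv_mul_of_hasDerivAt (a := a) (b := b)
    (u := fun t ↦ (b - t) ^ α) (u' := fun t ↦ -(α * (b - t) ^ (α - 1))) (v := f) (v' := f')
    (continuous_const_sub_rpow hα.le b).continuousOn (by rwa [uIcc_of_le hab])
    (fun t ht ↦ hasDerivAt_const_sub_rpow (by rw [max_eq_right hab] at ht; exact ht.2.ne) α)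
    (by rwa [min_eq_left hab, max_eq_right hab])
    ((intervalIntegrable_const_sub_rpow (by linarith) a b b).const_mul α).neg hf'
  simp only [sub_self, Real.zero_rpow hα.ne', zero_mul, neg_mul, mul_assoc,
    intervalIntegral.integral_neg, intervalIntegral.integral_const_mul] at parts
  rw [parts]
  ring

theorem RL_add_one_of_hasDerivAt (hab : a ≤ b) (hα : 0 ≤ α)
    (hfc : ContinuousOn f (Icc a b)) (hf : ∀ t ∈ Ioo a b, HasDerivAt f (f' t) t)
    (hf' : IntervalIntegrable f' volume a b) :
    RL a (α + 1) f' b = RL a α f b - (b - a) ^ α / Real.Gamma (α + 1) * f a := by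
  have hΓ : Real.Gamma (α + 1) ≠ 0 := (Real.Gamma_pos_of_pos (by positivity)).ne'
  refine mul_left_cancel₀ hΓ ?_
  rw [Gamma_add_one_mul_RL_add_one (by linarith), mul_sub, ← mul_assoc, mul_div_cancel₀ _ hΓ]
  rcases hα.eq_or_lt with rfl | hα
  · simp [RL_zero, integral_eq_sub_of_hasDerivAt_of_le hab hfc hf hf']
  · rw [integral_const_sub_rpow_mul_of_hasDerivAt hab hα hfc hf hf', Real.Gamma_add_one hα.ne',
      mul_assoc, Gamma_mul_RL hα]

end HasDerivAt

theorem integral_const_sub_rpow_mul_sub_mul {a b α : ℝ} {g : ℝ → ℝ} (hab : a ≤ b) (hα : 0 < α)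
    (hg : IntervalIntegrable (fun t ↦ (b - t) ^ (α - 1) * g t) volume a b) (x : ℝ) :
    ∫ t in a..b, (b - t) ^ (α - 1) * (t - x) * g t =
      (b - x) * Real.Gamma α * RL a α g b - Real.Gamma (α + 1) * RL a (α + 1) g b := by
  have hg_mul : IntervalIntegrable (fun t ↦ (b - t) * ((b - t) ^ (α - 1) * g t)) volume a b :=
    hg.continuousOn_mul (by fun_prop)
  calc ∫ t in a..b, (b - t) ^ (α - 1) * (t - x) * g t
      = ∫ t in a..b, ((b - x) * ((b - t) ^ (α - 1) * g t)
          - (b - t) * ((b - t) ^ (α - 1) * g t)) := by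
        congr 1 with t
        ring
    _ = (b - x) * (∫ t in a..b, (b - t) ^ (α - 1) * g t)
          - ∫ t in a..b, (b - t) * ((b - t) ^ (α - 1) * g t) := by
        rw [intervalIntegral.integral_sub (hg.const_mul _) hg_mul,
          intervalIntegral.integral_const_mul]
    _ = (b - x) * (∫ t in a..b, (b - t) ^ (α - 1) * g t) - ∫ t in a..b, (b - t) ^ α * g t := by
        congr 1
        refine integral_congr fun t ht ↦ ?_
        rw [uIcc_of_le hab] at ht
        simp only [← mul_assoc, mul_rpow_sub_one_of_nonneg (sub_nonneg.2 ht.2) hα.ne']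
    _ = (b - x) * Real.Gamma α * RL a α g b - Real.Gamma (α + 1) * RL a (α + 1) g b := by
        rw [mul_assoc, Gamma_mul_RL hα, Gamma_add_one_mul_RL_add_one (by linarith)]

theorem integration_by_parts_identity_general
    {a b α : ℝ} (hab : a ≤ b) (hα : 1 ≤ α) {f f' : ℝ → ℝ}
    (hfc : ContinuousOn f (Icc a b)) (hf : ∀ t ∈ Ioo a b, HasDerivAt f (f' t) t)
    (hf' : IntervalIntegrable f' volume a b) (x : ℝ) :
    ∫ t in a..b, (b - t) ^ (α - 1) * (t - x) * f' t =
      (x - a) * (b - a) ^ (α - 1) * f a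
      + (b - x) * Real.Gamma α * RL a (α - 1) f b
      - Real.Gamma (α + 1) * RL a α f b := by
  have hα₀ : 0 < α := by linarith
  have hΓ : Real.Gamma α ≠ 0 := (Real.Gamma_pos_of_pos hα₀).ne'
  have hΓ' : Real.Gamma (α + 1) ≠ 0 := (Real.Gamma_pos_of_pos (by positivity)).ne'
  have RL_α : RL a α f' b = RL a (α - 1) f b - (b - a) ^ (α - 1) / Real.Gamma α * f a := by
    simpa only [sub_add_cancel] using RL_add_one_of_hasDerivAt hab (sub_nonneg.2 hα) hfc hf hf'
  have integrable : IntervalIntegrable (fun t ↦ (b - t) ^ (α - 1) * f' t) volume a b :=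
    hf'.continuousOn_mul (continuous_const_sub_rpow (sub_nonneg.2 hα) b).continuousOn
  rw [integral_const_sub_rpow_mul_sub_mul hab hα₀ integrable, RL_α,
    RL_add_one_of_hasDerivAt hab hα₀.le hfc hf hf',
    ← mul_rpow_sub_one_of_nonneg (sub_nonneg.2 hab) hα₀.ne']
  field_simp
  ring

theorem integration_by_parts_identity
    (a b α : ℝ) (hab : a < b) (hα : 1 ≤ α)
    (f f' : ℝ → ℝ)
    (hf : ∀ t ∈ Set.Icc a b, HasDerivAt f (f' t) t)
    (hf' : IntervalIntegrable f' volume a b)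
    (x : ℝ) (hx : x ∈ Set.Icc a b) :
    (∫ t in a..b, (b - t) ^ (α - 1) * (t - x) * f' t) =
      (x - a) * (b - a) ^ (α - 1) * f a
      + (b - x) * Real.Gamma α * RL a (α - 1) f b
      - Real.Gamma (α + 1) * RL a α f b :=
  integration_by_parts_identity_general hab.le hα (HasDerivAt.continuousOn hf)
    (fun t ht ↦ hf t (Ioo_subset_Icc_self ht)) hf' x
end
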